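/- arXiv:1709.04642 — 2 statements merged into one kernel-verified Lean document; each statement's English description precedes it below -/
import Mathlib

section
/- Let Σ be a planar rotation system of a finite simple graph G and let e be an edge of G. Then the rotation system induced by Σ on G − e is a planar rotation system of G − e. -/
open SimpleGraph

/-- A rotation system of a simple graph: a permutation of the darts mapping each dart to a
dart with the same initial vertex, such that for every vertex the darts with that initial
vertex form a single orbit (or there are none). -/
structure RotationSystem {V : Type*} (G : SimpleGraph V) where
  toPerm : Equiv.Perm G.Dart
  fst_eq : ∀ d : G.Dart, (toPerm d).toProd.1 = d.toProd.1
  single_orbit : ∀ d d' : G.Dart, d.toProd.1 = d'.toProd.1 → ∃ n : ℕ, (toPerm ^ n) d = d'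

/-- The face permutation `d ↦ σ (reversal of d)` of a rotation system. -/
def RotationSystem.facePerm {V : Type*} {G : SimpleGraph V} (ρ : RotationSystem G) :
    Equiv.Perm G.Dart :=
  (Function.Involutive.toPerm SimpleGraph.Dart.symm (fun d => d.symm_symm)).trans ρ.toPerm

/-- Two darts lie on the same face iff they are in the same cycle of the face permutation. -/
def RotationSystem.faceSetoid {V : Type*} {G : SimpleGraph V} (ρ : RotationSystem G) :
    Setoid G.Dart where
  r := ρ.facePerm.SameCycle
  iseqv := ⟨fun x => Equiv.Perm.SameCycle.refl _ x, fun h => h.symm, fun h h' => h.trans h'⟩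

/-- A rotation system is planar if for every connected component containing at least one
edge, its numbers of vertices `V`, edges `E` and faces `F` satisfy `V - E + F = 2`; this is
stated as `2*V + 2*F = D + 4` where `D`, the number of darts in the component, equals `2*E`. -/
def RotationSystem.IsPlanar {V : Type*} {G : SimpleGraph V} (ρ : RotationSystem G) : Prop :=
  ∀ c : G.ConnectedComponent, (∃ d : G.Dart, G.connectedComponentMk d.toProd.1 = c) →
    2 * Nat.card {x : V // G.connectedComponentMk x = c} +
      2 * Nat.card {q : Quotient ρ.faceSetoid // G.connectedComponentMk q.out.toProd.1 = c} =
      Nat.card {d : G.Dart // G.connectedComponentMk d.toProd.1 = c} + 4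

/-- A dart of `G − e` (more generally, of `G` minus a set of edges) is a dart of `G`. -/
def liftDart {V : Type*} {G : SimpleGraph V} {s : Set (Sym2 V)}
    (d : (G.deleteEdges s).Dart) : G.Dart :=
  ⟨d.toProd, (SimpleGraph.deleteEdges_adj.mp d.adj).1⟩

/-- The potential-difference map of an abstract map. -/
noncomputable def diffMap {P D : Type*} (p q : D → P) :
    (P → ℝ) →ₗ[ℝ] EuclideanSpace ℝ D where
  toFun f := WithLp.toLp 2 (fun d => f (p d) - f (q d))
  map_add' f g := by ext d; simp; ring
  map_smul' c f := by ext d; simp; ring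

/-- Signed symmetrization. -/
noncomputable def signSym {D : Type*} (inv : D → D) (s : D → ℝ) :
    EuclideanSpace ℝ D →ₗ[ℝ] EuclideanSpace ℝ D where
  toFun h := WithLp.toLp 2 (fun d => s d * (h d + h (inv d)))
  map_add' f g := by ext d; simp; ring
  map_smul' c f := by ext d; simp; ring

/-- Antisymmetric functions. -/
def antiSub {D : Type*} (inv : D → D) : Submodule ℝ (EuclideanSpace ℝ D) where
  carrier := {h | ∀ d, h (inv d) = - h d}
  add_mem' := by
    intro a b ha hb d
    have h1 := ha d
    have h2 := hb d
    simp only [PiLp.add_apply, h1, h2]; ring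
  zero_mem' := by intro d; simp
  smul_mem' := by
    intro c a ha d
    have h1 := ha d
    simp only [PiLp.smul_apply, smul_eq_mul, h1]; ring

theorem finrank_antiSub {D : Type*} [Fintype D] (inv : D → D) (hinv : ∀ d, inv (inv d) = d)
    (s : D → ℝ) (hs : ∀ d, s d * s d = 1) (hsi : ∀ d, s (inv d) = - s d) :
    2 * Module.finrank ℝ (antiSub inv) = Fintype.card D := by
  have h1 := (signSym inv s).finrank_range_add_finrank_ker
  have hk : LinearMap.ker (signSym inv s) = antiSub inv := by
    ext h
    constructor
    · intro hh d
      have := congrArg (fun w : EuclideanSpace ℝ D => w d) (LinearMap.mem_ker.1 hh)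
      simp only [signSym, LinearMap.coe_mk, AddHom.coe_mk, PiLp.zero_apply] at this
      have hs0 : s d ≠ 0 := by
        intro h0; have := hs d; rw [h0] at this; norm_num at this
      rcases mul_eq_zero.1 this with h | h
      · exact absurd h hs0
      · linarith
    · intro hh
      rw [LinearMap.mem_ker]
      ext d
      have := hh d
      simp [signSym, this]
  have hr : LinearMap.range (signSym inv s) = antiSub inv := by
    ext h
    constructor
    · rintro ⟨k, rfl⟩ d
      simp only [signSym, LinearMap.coe_mk, AddHom.coe_mk, hinv, hsi]
      ring
    · intro hh
      refine ⟨WithLp.toLp 2 (fun d => s d * h d / 2), ?_⟩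
      ext d
      have h1 := hh d
      have h2 := hs d
      simp only [signSym, LinearMap.coe_mk, AddHom.coe_mk, hsi, h1]
      linear_combination (h d) * h2
  rw [hk, hr, finrank_euclideanSpace] at h1
  omega

theorem finrank_range_diffMap {P D : Type*} [Fintype P] (p q : D → P) (x₀ : P)
    (hconn : ∀ f : P → ℝ, (∀ d, f (p d) = f (q d)) → ∀ x, f x = f x₀) :
    Module.finrank ℝ (LinearMap.range (diffMap p q)) + 1 = Fintype.card P := by
  have h1 := (diffMap p q).finrank_range_add_finrank_ker
  have hk : LinearMap.ker (diffMap p q) = Submodule.span ℝ {(fun _ => 1 : P → ℝ)} := by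
    ext f
    rw [Submodule.mem_span_singleton]
    constructor
    · intro hh
      refine ⟨f x₀, ?_⟩
      ext x
      simp only [Pi.smul_apply, smul_eq_mul, mul_one]
      refine (hconn f (fun d => ?_) x).symm
      have := congrArg (fun w : EuclideanSpace ℝ D => w d) (LinearMap.mem_ker.1 hh)
      simp only [diffMap, LinearMap.coe_mk, AddHom.coe_mk, PiLp.zero_apply] at this
      linarith
    · rintro ⟨a, rfl⟩
      rw [LinearMap.mem_ker]
      ext d
      simp [diffMap]
  rw [hk, finrank_span_singleton, Module.finrank_fintype_fun_eq_card] at h1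
  · exact h1
  · intro h0
    have := congrFun h0 x₀
    norm_num at this

/-- Euler's formula as vanishing of first cohomology. -/
theorem euler_iff {P D Q : Type*} [Fintype P] [Fintype D] [Fintype Q]
    (src : D → P) (inv : D → D) (hinv : ∀ d, inv (inv d) = d)
    (s : D → ℝ) (hs : ∀ d, s d * s d = 1) (hsi : ∀ d, s (inv d) = - s d)
    (φ : Equiv.Perm D) (hφ : ∀ d, src (φ d) = src (inv d))
    (face : D → Q) (hface : ∀ d, face (φ d) = face d)
    (x₀ : P) (q₀ : Q)
    (hconn : ∀ f : P → ℝ, (∀ d, f (src (inv d)) = f (src d)) → ∀ x, f x = f x₀)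
    (hconn' : ∀ g : Q → ℝ, (∀ d, g (face d) = g (face (inv d))) → ∀ q, g q = g q₀) :
    2 * Fintype.card P + 2 * Fintype.card Q = Fintype.card D + 4 ↔
    ∀ h : D → ℝ, (∀ d, h (inv d) = - h d) → (∀ g : Q → ℝ, ∑ d, h d * g (face d) = 0) →
      ∃ f : P → ℝ, ∀ d, h d = f (src (inv d)) - f (src d) := by
  have e1 := finrank_antiSub inv hinv s hs hsi
  have e2 := finrank_range_diffMap _ _ x₀ hconn
  have e3 := finrank_range_diffMap _ _ q₀ hconn'
  set δ := diffMap (fun d => src (inv d)) src with hδ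
  set η := diffMap face (fun d => face (inv d)) with hη
  have hle : LinearMap.range η ≤ antiSub inv := by
    rintro _ ⟨g, rfl⟩ d
    simp [hη, diffMap, hinv]
  have hle' : LinearMap.range δ ≤ antiSub inv := by
    rintro _ ⟨g, rfl⟩ d
    simp [hδ, diffMap, hinv]
  have e4 := Submodule.finrank_add_inf_finrank_orthogonal hle
  set K := (LinearMap.range η)ᗮ ⊓ antiSub inv with hK
  let I : D ≃ D := Function.Involutive.toPerm inv hinv
  -- orthogonality
  have horth : ∀ h : EuclideanSpace ℝ D, h ∈ antiSub inv →
      (h ∈ (LinearMap.range η)ᗮ ↔ ∀ g : Q → ℝ, ∑ d, h d * g (face d) = 0) := by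
    intro h hh
    have key : ∀ g : Q → ℝ, inner ℝ (η g) h = 2 * ∑ d, h d * g (face d) := by
      intro g
      have : ∑ d, h d * g (face (inv d)) = - ∑ d, h d * g (face d) := by
        rw [← Equiv.sum_comp I, ← Finset.sum_neg_distrib]
        refine Finset.sum_congr rfl fun d _ => ?_
        change h (inv d) * g (face (inv (inv d))) = _
        rw [hinv, hh d]; ring
      rw [PiLp.inner_apply]
      have h2 : ∀ d, inner ℝ ((η g) d) (h d) = h d * g (face d) - h d * g (face (inv d)) := by
        intro d
        simp [hη, diffMap]
        ring
      simp only [h2, Finset.sum_sub_distrib, this]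
      ring
    rw [Submodule.mem_orthogonal]
    constructor
    · intro H g
      have := H (η g) ⟨g, rfl⟩
      rw [key] at this
      linarith
    · rintro H _ ⟨g, rfl⟩
      rw [key, H g]; ring
  have hδK : LinearMap.range δ ≤ K := by
    intro h hh
    refine ⟨?_, hle' hh⟩
    rw [SetLike.mem_coe, horth h (hle' hh)]
    intro g
    obtain ⟨f, rfl⟩ := hh
    have : ∑ d, f (src (inv d)) * g (face d) = ∑ d, f (src d) * g (face d) := by
      rw [← Equiv.sum_comp φ (fun d => f (src d) * g (face d))]
      refine Finset.sum_congr rfl fun d _ => ?_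
      rw [hφ, hface]
    simp only [hδ, diffMap, LinearMap.coe_mk, AddHom.coe_mk, sub_mul, Finset.sum_sub_distrib, this]
    ring
  have iff1 : (2 * Fintype.card P + 2 * Fintype.card Q = Fintype.card D + 4) ↔ K ≤ LinearMap.range δ := by
    constructor
    · intro H
      have : Module.finrank ℝ (LinearMap.range δ) = Module.finrank ℝ K := by omega
      exact (Submodule.eq_of_le_of_finrank_eq hδK this).ge
    · intro H
      have := le_antisymm H hδK
      rw [this] at e4
      omega
  rw [iff1]
  constructor
  · intro H h ha ho
    have ha' : WithLp.toLp 2 h ∈ antiSub inv := ha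
    obtain ⟨f, hf⟩ := H ⟨(horth (WithLp.toLp 2 h) ha').2 ho, ha'⟩
    refine ⟨f, fun d => ?_⟩
    have := congrArg (fun w : EuclideanSpace ℝ D => w d) hf
    simpa [hδ, diffMap] using this.symm
  · rintro H h ⟨ho, ha⟩
    obtain ⟨f, hf⟩ := H (fun d => h d) ha ((horth h ha).1 ho)
    refine ⟨f, ?_⟩
    ext d
    simp [hδ, diffMap, hf]

namespace RotationSystem

variable {V : Type*} {G : SimpleGraph V}

theorem facePerm_apply (ρ : RotationSystem G) (d : G.Dart) :
    ρ.facePerm d = ρ.toPerm d.symm := rfl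

theorem facePerm_fst (ρ : RotationSystem G) (d : G.Dart) :
    (ρ.facePerm d).toProd.1 = d.symm.toProd.1 := ρ.fst_eq d.symm

theorem comp_symm (d : G.Dart) :
    G.connectedComponentMk d.symm.toProd.1 = G.connectedComponentMk d.toProd.1 :=
  ConnectedComponent.sound d.adj.symm.reachable

theorem comp_facePerm (ρ : RotationSystem G) (d : G.Dart) :
    G.connectedComponentMk (ρ.facePerm d).toProd.1 = G.connectedComponentMk d.toProd.1 := by
  rw [facePerm_fst, comp_symm]

theorem invariant_sameCycle {D X : Type*} (φ : Equiv.Perm D) (g : D → X)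
    (hg : ∀ d, g (φ d) = g d) {d d' : D} (h : φ.SameCycle d d') : g d = g d' := by
  obtain ⟨n, rfl⟩ := h
  have hinv : ∀ d, g (φ⁻¹ d) = g d := fun d => by
    rw [← hg (φ⁻¹ d)]; simp
  induction n with
  | zero => simp
  | succ n ih => rw [add_comm, zpow_add, zpow_one, Equiv.Perm.mul_apply, hg]; exact ih
  | pred n ih =>
    rw [sub_eq_add_neg, add_comm, zpow_add, zpow_neg_one, Equiv.Perm.mul_apply, hinv]; exact ih

/-- Vanishing of first cohomology on a set of darts. -/
def HOne [Fintype G.Dart] (ρ : RotationSystem G) (p : G.Dart → Prop) : Prop :=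
  ∀ h : G.Dart → ℝ, (∀ d, h d.symm = - h d) →
    (∀ g : G.Dart → ℝ, (∀ d, g (ρ.facePerm d) = g d) → ∑ d, h d * g d = 0) →
    ∃ f : V → ℝ, ∀ d, p d → h d = f d.symm.toProd.1 - f d.toProd.1

theorem walk_const (f : V → ℝ) (hf : ∀ d : G.Dart, f d.symm.toProd.1 = f d.toProd.1)
    {x y : V} (w : G.Walk x y) : f x = f y := by
  induction w with
  | nil => rfl
  | cons hadj w ih => rw [← ih]; exact (hf ⟨(_, _), hadj⟩).symm

theorem dart_const (ρ : RotationSystem G) (g : G.Dart → ℝ)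
    (hg : ∀ d, g (ρ.facePerm d) = g d) (hs : ∀ d, g d.symm = g d)
    {x y : V} (w : G.Walk x y) :
    ∀ d d' : G.Dart, d.toProd.1 = x → d'.toProd.1 = y → g d = g d' := by
  have same : ∀ d d' : G.Dart, d.toProd.1 = d'.toProd.1 → g d = g d' := by
    intro d d' hdd
    obtain ⟨n, rfl⟩ := ρ.single_orbit d d' hdd
    clear hdd
    induction n with
    | zero => simp
    | succ n ih =>
      rw [pow_succ', Equiv.Perm.mul_apply]
      have := hg ((ρ.toPerm ^ n) d).symm
      rw [facePerm_apply, Dart.symm_symm, hs] at this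
      rw [this]; exact ih
  induction w with
  | nil => intro d d' h1 h2; exact same d d' (h1.trans h2.symm)
  | cons hadj w ih =>
    intro d d' h1 h2
    let b : G.Dart := ⟨(_, _), hadj⟩
    rw [same d b h1, ← hs b]
    exact ih b.symm d' rfl h2

theorem comp_out (ρ : RotationSystem G) (d : G.Dart) :
    G.connectedComponentMk (Quotient.mk ρ.faceSetoid d).out.toProd.1 =
      G.connectedComponentMk d.toProd.1 :=
  invariant_sameCycle ρ.facePerm (fun d => G.connectedComponentMk d.toProd.1)
    (comp_facePerm ρ) (Quotient.mk_out (s := ρ.faceSetoid) d)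

theorem mk_facePerm (ρ : RotationSystem G) (d : G.Dart) :
    Quotient.mk ρ.faceSetoid (ρ.facePerm d) = Quotient.mk ρ.faceSetoid d :=
  Quotient.sound (s := ρ.faceSetoid)
    ((Equiv.Perm.sameCycle_apply_left (f := ρ.facePerm)).2 (Equiv.Perm.SameCycle.refl _ _))

theorem component_iff [Finite V] [Fintype G.Dart] (ρ : RotationSystem G)
    (c : G.ConnectedComponent) (d₀ : G.Dart) (hd₀ : G.connectedComponentMk d₀.toProd.1 = c) :
    (2 * Nat.card {x : V // G.connectedComponentMk x = c} +
      2 * Nat.card {q : Quotient ρ.faceSetoid // G.connectedComponentMk q.out.toProd.1 = c} =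
      Nat.card {d : G.Dart // G.connectedComponentMk d.toProd.1 = c} + 4) ↔
    HOne ρ (fun d => G.connectedComponentMk d.toProd.1 = c) := by
  classical
  let P := {x : V // G.connectedComponentMk x = c}
  let Q := {q : Quotient ρ.faceSetoid // G.connectedComponentMk q.out.toProd.1 = c}
  let D := {d : G.Dart // G.connectedComponentMk d.toProd.1 = c}
  have : Fintype P := Fintype.ofFinite _
  have : Fintype Q := Fintype.ofFinite _
  have : Fintype D := Fintype.ofFinite _
  let src : D → P := fun d => ⟨d.1.toProd.1, d.2⟩
  let inv : D → D := fun d => ⟨d.1.symm, (comp_symm d.1).trans d.2⟩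
  have hinv : ∀ d, inv (inv d) = d := fun d => Subtype.ext d.1.symm_symm
  obtain ⟨n, ⟨E⟩⟩ := Finite.exists_equiv_fin V
  let s : D → ℝ := fun d => if E d.1.toProd.1 < E d.1.toProd.2 then 1 else -1
  have hs : ∀ d, s d * s d = 1 := by
    intro d; simp only [s]; split_ifs <;> norm_num
  have hsi : ∀ d, s (inv d) = - s d := by
    intro d
    have hne : E d.1.toProd.1 ≠ E d.1.toProd.2 := fun h => d.1.adj.ne (E.injective h)
    change (if E d.1.toProd.2 < E d.1.toProd.1 then (1 : ℝ) else -1) =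
      - (if E d.1.toProd.1 < E d.1.toProd.2 then (1 : ℝ) else -1)
    rcases lt_or_gt_of_ne hne with h | h
    · rw [if_neg h.not_gt, if_pos h]
    · rw [if_pos h, if_neg (not_lt.2 h.le)]; norm_num
  let φ : Equiv.Perm D := ρ.facePerm.subtypePerm (fun d => by rw [comp_facePerm])
  have hφ : ∀ d, src (φ d) = src (inv d) := fun d => Subtype.ext (facePerm_fst ρ d.1)
  let face : D → Q := fun d => ⟨Quotient.mk ρ.faceSetoid d.1, (comp_out ρ d.1).trans d.2⟩
  have hface : ∀ d, face (φ d) = face d := fun d => Subtype.ext (mk_facePerm ρ d.1)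
  have hfo : ∀ q : Q, face ⟨q.1.out, q.2⟩ = q := fun q => Subtype.ext (Quotient.out_eq q.1)
  have hreach : ∀ x y : V, G.connectedComponentMk x = c → G.connectedComponentMk y = c →
      Nonempty (G.Walk x y) := fun x y hx hy => ConnectedComponent.exact (hx.trans hy.symm)
  have hconn : ∀ f : P → ℝ, (∀ d, f (src (inv d)) = f (src d)) → ∀ x, f x = f (src ⟨d₀, hd₀⟩) := by
    intro f hf x
    let f' : V → ℝ := fun x => if hx : G.connectedComponentMk x = c then f ⟨x, hx⟩ else 0
    have h1 : ∀ x : P, f' x.1 = f x := fun x => dif_pos x.2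
    have h2 : ∀ d : G.Dart, f' d.symm.toProd.1 = f' d.toProd.1 := by
      intro d
      by_cases hd : G.connectedComponentMk d.toProd.1 = c
      · exact (h1 (src (inv ⟨d, hd⟩))).trans ((hf ⟨d, hd⟩).trans (h1 (src ⟨d, hd⟩)).symm)
      · have hd' : ¬ G.connectedComponentMk d.symm.toProd.1 = c := by rwa [comp_symm]
        simp only [f']
        rw [dif_neg hd, dif_neg hd']
    obtain ⟨w⟩ := hreach x.1 d₀.toProd.1 x.2 hd₀
    rw [← h1, ← h1]
    exact walk_const f' h2 w
  have hconn' : ∀ g : Q → ℝ, (∀ d, g (face d) = g (face (inv d))) →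
      ∀ q, g q = g (face ⟨d₀, hd₀⟩) := by
    intro g hg q
    let g' : G.Dart → ℝ := fun d =>
      if hd : G.connectedComponentMk d.toProd.1 = c then g (face ⟨d, hd⟩) else 0
    have h1 : ∀ d : D, g' d.1 = g (face d) := fun d => dif_pos d.2
    have h2 : ∀ d, g' (ρ.facePerm d) = g' d := by
      intro d
      by_cases hd : G.connectedComponentMk d.toProd.1 = c
      · exact (h1 (φ ⟨d, hd⟩)).trans ((congrArg g (hface ⟨d, hd⟩)).trans (h1 ⟨d, hd⟩).symm)
      · have hd' : ¬ G.connectedComponentMk (ρ.facePerm d).toProd.1 = c := by rwa [comp_facePerm]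
        simp only [g']
        rw [dif_neg hd, dif_neg hd']
    have h3 : ∀ d : G.Dart, g' d.symm = g' d := by
      intro d
      by_cases hd : G.connectedComponentMk d.toProd.1 = c
      · exact (h1 (inv ⟨d, hd⟩)).trans ((hg ⟨d, hd⟩).symm.trans (h1 ⟨d, hd⟩).symm)
      · have hd' : ¬ G.connectedComponentMk d.symm.toProd.1 = c := by rwa [comp_symm]
        simp only [g']
        rw [dif_neg hd, dif_neg hd']
    obtain ⟨w⟩ := hreach q.1.out.toProd.1 d₀.toProd.1 q.2 hd₀
    rw [← h1, ← hfo q, ← h1]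
    exact dart_const ρ g' h2 h3 w _ _ rfl rfl
  have main := euler_iff src inv hinv s hs hsi φ hφ face hface _ _ hconn hconn'
  rw [← Nat.card_eq_fintype_card, ← Nat.card_eq_fintype_card, ← Nat.card_eq_fintype_card] at main
  refine main.trans ⟨?_, ?_⟩
  · intro H h ha ho
    obtain ⟨f, hf⟩ := H (fun d => h d.1) (fun d => ha d.1) (by
      intro g
      let g' : G.Dart → ℝ := fun d =>
        if hd : G.connectedComponentMk d.toProd.1 = c then g (face ⟨d, hd⟩) else 0
      have h1 : ∀ d : D, g' d.1 = g (face d) := fun d => dif_pos d.2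
      have h2 : ∀ d, g' (ρ.facePerm d) = g' d := by
        intro d
        by_cases hd : G.connectedComponentMk d.toProd.1 = c
        · exact (h1 (φ ⟨d, hd⟩)).trans ((congrArg g (hface ⟨d, hd⟩)).trans (h1 ⟨d, hd⟩).symm)
        · have hd' : ¬ G.connectedComponentMk (ρ.facePerm d).toProd.1 = c := by
            rwa [comp_facePerm]
          simp only [g']
          rw [dif_neg hd, dif_neg hd']
      rw [← ho g' h2]
      refine Fintype.sum_of_injective Subtype.val Subtype.val_injective _ _ ?_ ?_
      · intro d hd
        have : g' d = 0 := dif_neg (fun h => hd ⟨⟨d, h⟩, rfl⟩)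
        rw [this, mul_zero]
      · intro d
        rw [h1])
    refine ⟨fun x => if hx : G.connectedComponentMk x = c then f ⟨x, hx⟩ else 0, ?_⟩
    intro d hd
    have hd' : G.connectedComponentMk d.symm.toProd.1 = c := by rwa [comp_symm]
    have := hf ⟨d, hd⟩
    dsimp only at this ⊢
    rw [dif_pos hd, dif_pos hd', this]
  · intro H h ha ho
    let h' : G.Dart → ℝ := fun d =>
      if hd : G.connectedComponentMk d.toProd.1 = c then h ⟨d, hd⟩ else 0
    have h1 : ∀ d : D, h' d.1 = h d := fun d => dif_pos d.2
    obtain ⟨f, hf⟩ := H h' (by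
      intro d
      by_cases hd : G.connectedComponentMk d.toProd.1 = c
      · rw [h1 ⟨d, hd⟩, ← ha ⟨d, hd⟩]
        exact h1 (inv ⟨d, hd⟩)
      · have hd' : ¬ G.connectedComponentMk d.symm.toProd.1 = c := by rwa [comp_symm]
        simp only [h']
        rw [dif_neg hd, dif_neg hd', neg_zero]) (by
      intro g hg
      rw [← ho (fun q => g q.1.out)]
      symm
      refine Fintype.sum_of_injective Subtype.val Subtype.val_injective _ _ ?_ ?_
      · intro d hd
        have : h' d = 0 := dif_neg (fun h => hd ⟨⟨d, h⟩, rfl⟩)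
        rw [this, zero_mul]
      · intro d
        rw [h1]
        congr 1
        exact invariant_sameCycle ρ.facePerm g hg (Quotient.mk_out (s := ρ.faceSetoid) d.1))
    exact ⟨fun x => f x.1, fun d => (h1 d).symm.trans (hf d.1 d.2)⟩

theorem isPlanar_iff [Finite V] [Fintype G.Dart] (ρ : RotationSystem G) :
    ρ.IsPlanar ↔ HOne ρ (fun _ => True) := by
  constructor
  · intro H h ha ho
    have : ∀ c : G.ConnectedComponent, ∃ f : V → ℝ, ∀ d : G.Dart,
        G.connectedComponentMk d.toProd.1 = c → h d = f d.symm.toProd.1 - f d.toProd.1 := by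
      intro c
      by_cases hc : ∃ d : G.Dart, G.connectedComponentMk d.toProd.1 = c
      · obtain ⟨d, hd⟩ := hc
        exact (component_iff ρ c d hd).1 (H c ⟨d, hd⟩) h ha ho
      · exact ⟨0, fun d hd => absurd ⟨d, hd⟩ hc⟩
    choose f hf using this
    refine ⟨fun x => f (G.connectedComponentMk x) x, fun d _ => ?_⟩
    dsimp only
    rw [comp_symm]
    exact hf _ d rfl
  · rintro H c ⟨d, hd⟩
    refine (component_iff ρ c d hd).2 fun h ha ho => ?_
    obtain ⟨f, hf⟩ := H h ha ho
    exact ⟨f, fun d _ => hf d trivial⟩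

end RotationSystem

/-- the rotation system induced on `G − e` by a planar rotation system `ρ`
of `G` (each remaining dart `d` is sent to the first dart among `ρ d, ρ² d, …` that is
not a dart of `e`) is planar. -/
theorem induced_rotationSystem_deleteEdge_planar {V : Type*} [Fintype V]
    (G : SimpleGraph V) (ρ : RotationSystem G) (hρ : ρ.IsPlanar)
    (e : Sym2 V) (he : e ∈ G.edgeSet)
    (ρ' : RotationSystem (G.deleteEdges {e}))
    (hind : ∀ d : (G.deleteEdges {e}).Dart, ∃ n : ℕ, 0 < n ∧
      (ρ.toPerm ^ n) (liftDart d) = liftDart (ρ'.toPerm d) ∧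
      ∀ m : ℕ, 0 < m → m < n → ((ρ.toPerm ^ m) (liftDart d)).edge = e) :
    ρ'.IsPlanar := by
  classical
  have : Fintype G.Dart := Fintype.ofFinite _
  have : Fintype (G.deleteEdges {e}).Dart := Fintype.ofFinite _
  rw [RotationSystem.isPlanar_iff] at hρ ⊢
  intro h ha ho
  obtain ⟨a, rfl⟩ : ∃ a : G.Dart, a.edge = e := by
    induction e using Sym2.ind with
    | _ x y => exact ⟨⟨(x, y), he⟩, rfl⟩
  have hlinj : Function.Injective (liftDart : (G.deleteEdges {a.edge}).Dart → G.Dart) := by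
    intro d d' hdd
    have := congrArg Dart.toProd hdd
    exact Dart.ext _ _ this
  have hlsymm : ∀ d : (G.deleteEdges {a.edge}).Dart, liftDart d.symm = (liftDart d).symm :=
    fun d => rfl
  have hledge : ∀ d : (G.deleteEdges {a.edge}).Dart, (liftDart d).edge ≠ a.edge := by
    intro d hd
    exact (SimpleGraph.deleteEdges_adj.mp d.adj).2 hd
  -- invariant functions descend
  have hdesc : ∀ g : G.Dart → ℝ, (∀ d, g (ρ.facePerm d) = g d) → g a = g a.symm →
      ∀ d, g (liftDart (ρ'.facePerm d)) = g (liftDart d) := by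
    intro g hg hga d
    have hge : ∀ x : G.Dart, x.edge = a.edge → g x.symm = g x := by
      intro x hx
      rcases (dart_edge_eq_iff x a).1 hx with rfl | rfl
      · exact hga.symm
      · rw [Dart.symm_symm]; exact hga
    have hσ : ∀ x : G.Dart, g (ρ.toPerm x) = g x.symm := by
      intro x
      have := hg x.symm
      rwa [RotationSystem.facePerm_apply, Dart.symm_symm] at this
    obtain ⟨n, hn, h1, h2⟩ := hind d.symm
    rw [RotationSystem.facePerm_apply, ← h1]
    have : ∀ m, m < n → g ((ρ.toPerm ^ (m + 1)) (liftDart d.symm)) = g (liftDart d) := by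
      intro m
      induction m with
      | zero => intro _; rw [zero_add, pow_one, hσ, hlsymm, Dart.symm_symm]
      | succ m ih =>
        intro hm
        rw [pow_succ', Equiv.Perm.mul_apply, hσ, hge _ (h2 (m + 1) (by omega) hm)]
        exact ih (by omega)
    have := this (n - 1) (by omega)
    rwa [Nat.sub_add_cancel hn] at this
  let L : (G.Dart → ℝ) → ℝ := fun g => ∑ d, h d * g (liftDart d)
  -- the value on the deleted edge
  obtain ⟨t, ht⟩ : ∃ t : ℝ, ∀ g : G.Dart → ℝ, (∀ d, g (ρ.facePerm d) = g d) →
      L g + t * (g a - g a.symm) = 0 := by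
    by_cases hex : ∃ g₀ : G.Dart → ℝ, (∀ d, g₀ (ρ.facePerm d) = g₀ d) ∧ g₀ a - g₀ a.symm ≠ 0
    · obtain ⟨g₀, hg₀, hne⟩ := hex
      refine ⟨- L g₀ / (g₀ a - g₀ a.symm), fun g hg => ?_⟩
      set r := (g a - g a.symm) / (g₀ a - g₀ a.symm) with hr
      have hr' : r * (g₀ a - g₀ a.symm) = g a - g a.symm := div_mul_cancel₀ _ hne
      have h0 := ho (fun d => g (liftDart d) - r * g₀ (liftDart d))
        (hdesc (fun x => g x - r * g₀ x) (fun d => by rw [hg, hg₀]) (by linarith))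
      have h1 : L g - r * L g₀ = 0 := by
        rw [← h0]
        simp only [L, Finset.mul_sum, ← Finset.sum_sub_distrib]
        exact Finset.sum_congr rfl fun d _ => by ring
      rw [← hr']
      field_simp
      linarith
    · push Not at hex
      refine ⟨0, fun g hg => ?_⟩
      rw [zero_mul, add_zero]
      exact ho (fun d => g (liftDart d)) (hdesc g hg (sub_eq_zero.1 (hex g hg)))
  let h0 : G.Dart → ℝ := Function.extend liftDart h 0
  have h0l : ∀ d, h0 (liftDart d) = h d := fun d => hlinj.extend_apply _ _ _
  have h0n : ∀ x, (x ∉ Set.range (liftDart : (G.deleteEdges {a.edge}).Dart → G.Dart)) → h0 x = 0 :=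
    fun x hx => Function.extend_apply' _ _ _ hx
  let k : G.Dart → ℝ := fun x => (if x = a then 1 else 0) - (if x = a.symm then 1 else 0)
  have hsw : ∀ x : G.Dart, x.symm = a ↔ x = a.symm := fun x =>
    ⟨fun h => by rw [← h, Dart.symm_symm], fun h => by rw [h, Dart.symm_symm]⟩
  have hsw' : ∀ x : G.Dart, x.symm = a.symm ↔ x = a := fun x =>
    ⟨fun h => by rw [← x.symm_symm, h, Dart.symm_symm], fun h => by rw [h]⟩
  obtain ⟨f, hf⟩ := hρ (fun x => h0 x + t * k x) (by
    intro x
    have e1 : k x.symm = - k x := by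
      simp only [k, hsw, hsw']; ring
    have e2 : h0 x.symm = - h0 x := by
      by_cases hx : x ∈ Set.range (liftDart : (G.deleteEdges {a.edge}).Dart → G.Dart)
      · obtain ⟨d, rfl⟩ := hx
        rw [← hlsymm, h0l, h0l, ha]
      · rw [h0n x hx, h0n x.symm, neg_zero]
        rintro ⟨d, hd⟩
        exact hx ⟨d.symm, by rw [hlsymm, hd, Dart.symm_symm]⟩
    simp only [e1, e2]; ring) (by
    intro g hg
    rw [← ht g hg]
    have e1 : L g = ∑ x, h0 x * g x :=
      Fintype.sum_of_injective liftDart hlinj _ _ (fun x hx => by rw [h0n x hx, zero_mul])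
        (fun d => by rw [h0l])
    have e2 : ∑ x, k x * g x = g a - g a.symm := by
      simp [k, sub_mul, Finset.sum_sub_distrib]
    rw [e1, ← e2, Finset.mul_sum, ← Finset.sum_add_distrib]
    exact Finset.sum_congr rfl fun x _ => by ring)
  refine ⟨f, fun d _ => ?_⟩
  have := hf (liftDart d) trivial
  have hk : k (liftDart d) = 0 := by
    have n1 : liftDart d ≠ a := fun hh => hledge d (by rw [hh])
    have n2 : liftDart d ≠ a.symm := fun hh => hledge d (by rw [hh, Dart.edge_symm])
    simp only [k]
    rw [if_neg n1, if_neg n2, sub_zero]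
  simp only [h0l, hk, mul_zero, add_zero] at this
  exact this
end

section
/- Let G be a 3-connected finite simple graph that admits a planar rotation system, let v and w be two distinct vertices of G, let A be a set of three distinct edges incident with v and let B be a set of three distinct edges incident with w. Then exactly three of the six bijections f from A to B have the property that the marked graph (G, v, w, ((a, f(a)) for a ∈ A)) is planar. -/
open SimpleGraph

/-- A finite simple graph is `k`-connected if it has at least `k+1` vertices and removing
any set of fewer than `k` vertices leaves a connected graph. -/
def IsKConnected (k : ℕ) {V : Type*} [Fintype V] (G : SimpleGraph V) : Prop :=
  k + 1 ≤ Fintype.card V ∧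
    ∀ X : Finset V, X.card < k → (G.induce ((↑X : Set V)ᶜ)).Connected

/-- `y` is the first element of `S` among `σ x, σ² x, …`; for `x, y ∈ S` this says that
the restriction of (the cycle of) `σ` to `S` maps `x` to `y`. -/
def RestrictMapsTo {α : Type*} (σ : Equiv.Perm α) (S : Set α) (x y : α) : Prop :=
  ∃ n : ℕ, 0 < n ∧ (σ ^ n) x = y ∧ ∀ m : ℕ, 0 < m → m < n → (σ ^ m) x ∉ S

/-- The marked graph `(G, v, w, ((a i, b i) : i = 1,2,3))` — with the edges at `v` and `w`
identified with the darts at `v` and `w` — is planar: `G` has a planar rotation system whose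
rotator at `v` restricted to `{a 0, a 1, a 2}`, transported along `a i ↦ b i`, is the
inverse of its rotator at `w` restricted to `{b 0, b 1, b 2}`. -/
def MarkedPlanar {V : Type*} (G : SimpleGraph V) (a b : Fin 3 → G.Dart) : Prop :=
  ∃ ρ : RotationSystem G, ρ.IsPlanar ∧ ∀ i j : Fin 3,
    RestrictMapsTo ρ.toPerm (Set.range a) (a i) (a j) →
      RestrictMapsTo ρ.toPerm (Set.range b) (b j) (b i)

open Module

def InvF {D : Type*} (p : Equiv.Perm D) : Submodule (ZMod 2) (D → ZMod 2) where
  carrier := {T | ∀ d, T (p d) = T d}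
  add_mem' := by intro a b ha hb d; simp [ha d, hb d]
  zero_mem' := by intro d; rfl
  smul_mem' := by intro c a ha d; simp [ha d]

theorem mem_InvF {D : Type*} {p : Equiv.Perm D} {T : D → ZMod 2} :
    T ∈ InvF p ↔ ∀ d, T (p d) = T d := Iff.rfl

theorem InvF_inv {D : Type*} (p : Equiv.Perm D) : InvF p⁻¹ = InvF p := by
  ext T
  simp only [mem_InvF]
  constructor
  · intro h d
    have := h (p d)
    simpa using this.symm
  · intro h d
    have := h (p⁻¹ d)
    simpa using this.symm

/-- `T ↦ T + T ∘ p`. -/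
def deltaF {D : Type*} (p : Equiv.Perm D) : (D → ZMod 2) →ₗ[ZMod 2] (D → ZMod 2) where
  toFun T d := T d + T (p d)
  map_add' a b := by ext d; simp; ring
  map_smul' c a := by ext d; simp; ring

theorem zmod2_add_self (x : ZMod 2) : x + x = 0 := CharTwo.add_self_eq_zero x

/-- vectors orthogonal to a subspace. -/
theorem finrank_perp {D : Type*} [Fintype D] (K : Submodule (ZMod 2) (D → ZMod 2))
    (L : Submodule (ZMod 2) (D → ZMod 2))
    (hL : ∀ γ, γ ∈ L ↔ ∀ g ∈ K, ∑ d, γ d * g d = 0) :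
    finrank (ZMod 2) L + finrank (ZMod 2) K = Fintype.card D := by
  classical
  let e := dotProductEquiv (ZMod 2) D
  have h1 : L = K.dualAnnihilator.comap e.toLinearMap := by
    ext γ
    rw [hL, Submodule.mem_comap, Submodule.mem_dualAnnihilator]
    rfl
  have h2 : finrank (ZMod 2) L = finrank (ZMod 2) K.dualAnnihilator := by
    rw [h1]
    change finrank (ZMod 2) (K.dualAnnihilator.comap (e : (D → ZMod 2) →ₗ[ZMod 2] _)) = _
    rw [Submodule.comap_equiv_eq_map_symm]
    exact LinearEquiv.finrank_map_eq e.symm _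
  have h3 := Subspace.finrank_add_finrank_dualAnnihilator_eq K
  simp at h3
  omega

theorem core {D : Type*} [Fintype D] (p q r : Equiv.Perm D) (hq : q = r * p)
    (hconn : ∀ T : D → ZMod 2, (∀ d, T (p d) = T d) → (∀ d, T (q d) = T d) → ∀ d d', T d = T d')
    (hE : Fintype.card D + 2 ≤ finrank (ZMod 2) (InvF p) + finrank (ZMod 2) (InvF q)
      + finrank (ZMod 2) (InvF r))
    (γ : D → ZMod 2)
    (h1 : ∀ g : D → ZMod 2, (∀ d, g (p d) = g d) → ∑ d, γ d * g d = 0)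
    (h2 : ∀ g : D → ZMod 2, (∀ d, g (q d) = g d) → ∑ d, γ d * g d = 0) :
    ∃ T : D → ZMod 2, (∀ d, T (r d) = T d) ∧ ∀ d, γ d = T d + T (p d) := by
  classical
  have hc : finrank (ZMod 2) (InvF p ⊓ InvF q : Submodule (ZMod 2) (D → ZMod 2)) ≤ 1 := by
    rw [finrank_le_one_iff]
    refine ⟨⟨fun _ => 1, by constructor <;> intro d <;> rfl⟩, ?_⟩
    rintro ⟨T, hT1, hT2⟩
    by_cases hD : Nonempty D
    · obtain ⟨d0⟩ := hD
      refine ⟨T d0, ?_⟩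
      ext d
      simp [hconn T hT1 hT2 d0 d]
    · refine ⟨0, ?_⟩
      ext d
      exact (hD ⟨d⟩).elim
  let L : Submodule (ZMod 2) (D → ZMod 2) :=
    { carrier := {γ | ∀ g ∈ InvF p ⊔ InvF q, ∑ d, γ d * g d = 0}
      add_mem' := by
        intro a b ha hb g hg
        simp [add_mul, Finset.sum_add_distrib, ha g hg, hb g hg]
      zero_mem' := by intro g hg; simp
      smul_mem' := by
        intro c a ha g hg
        simp [mul_assoc, ← Finset.mul_sum, ha g hg] }
  have hL : ∀ γ, γ ∈ L ↔ ∀ g ∈ InvF p ⊔ InvF q, ∑ d, γ d * g d = 0 := fun γ => Iff.rfl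
  have hL' : ∀ γ : D → ZMod 2, (∀ g ∈ InvF p, ∑ d, γ d * g d = 0) →
      (∀ g ∈ InvF q, ∑ d, γ d * g d = 0) → γ ∈ L := by
    intro γ h1 h2 g hg
    obtain ⟨a, ha, b, hb, rfl⟩ := Submodule.mem_sup.1 hg
    simp [mul_add, Finset.sum_add_distrib, h1 a ha, h2 b hb]
  have hLd := finrank_perp _ L hL
  have hs := Submodule.finrank_sup_add_finrank_inf_eq (InvF p) (InvF q)
  let δ := (deltaF p).domRestrict (InvF r)
  have hker : finrank (ZMod 2) (LinearMap.ker δ) ≤ 1 := by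
    refine le_trans ?_ hc
    have hmem : ∀ x : LinearMap.ker δ, (x.1.1 : D → ZMod 2) ∈ InvF p ⊓ InvF q := by
      rintro ⟨⟨T, hT⟩, hx⟩
      have hp : ∀ d, T (p d) = T d := by
        intro d
        have h0 : T d + T (p d) = 0 := congrFun (LinearMap.mem_ker.1 hx) d
        exact (CharTwo.add_eq_zero.1 h0).symm
      refine ⟨hp, ?_⟩
      intro d
      change T (q d) = T d
      rw [hq, Equiv.Perm.mul_apply, hT, hp]
    let f : LinearMap.ker δ →ₗ[ZMod 2] (InvF p ⊓ InvF q : Submodule (ZMod 2) (D → ZMod 2)) :=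
      LinearMap.codRestrict _ ((InvF r).subtype ∘ₗ (LinearMap.ker δ).subtype) hmem
    refine LinearMap.finrank_le_finrank_of_injective (f := f) ?_
    intro x y hxy
    have : (f x).1 = (f y).1 := by rw [hxy]
    exact Subtype.ext (Subtype.ext this)
  have hrk := LinearMap.finrank_range_add_finrank_ker δ
  have hle : LinearMap.range δ ≤ L := by
    rintro _ ⟨⟨T, hT⟩, rfl⟩
    have hT' : ∀ d, T (p d) = T (q d) := by
      intro d
      rw [hq, Equiv.Perm.mul_apply, hT]
    apply hL'
    · intro g hg
      change ∑ d, (T d + T (p d)) * g d = 0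
      have : ∑ d, T (p d) * g d = ∑ d, T d * g d := by
        rw [← Equiv.sum_comp p (fun d => T d * g d)]
        exact Finset.sum_congr rfl fun d _ => by rw [hg d]
      simp only [add_mul, Finset.sum_add_distrib]
      rw [this, zmod2_add_self]
    · intro g hg
      change ∑ d, (T d + T (p d)) * g d = 0
      have : ∑ d, T (p d) * g d = ∑ d, T d * g d := by
        rw [← Equiv.sum_comp q (fun d => T d * g d)]
        exact Finset.sum_congr rfl fun d _ => by rw [hg d, hT']
      simp only [add_mul, Finset.sum_add_distrib]
      rw [this, zmod2_add_self]
  have heq : LinearMap.range δ = L := by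
    apply Submodule.eq_of_le_of_finrank_le hle
    omega
  have hγ : γ ∈ LinearMap.range δ := by
    rw [heq]
    exact hL' γ h1 h2
  obtain ⟨⟨T, hT⟩, hx⟩ := hγ
  exact ⟨T, hT, fun d => (congrFun hx d).symm⟩

section Graph

variable {V : Type*} {G : SimpleGraph V}

/-- Dart reversal as a permutation. -/
def alphaP (G : SimpleGraph V) : Equiv.Perm G.Dart :=
  Function.Involutive.toPerm SimpleGraph.Dart.symm (fun d => d.symm_symm)

theorem alphaP_apply (d : G.Dart) : alphaP G d = d.symm := rfl

theorem facePerm_apply (ρ : RotationSystem G) (d : G.Dart) :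
    ρ.facePerm d = ρ.toPerm d.symm := rfl

theorem facePerm_inv (ρ : RotationSystem G) : ρ.facePerm⁻¹ = alphaP G * ρ.toPerm⁻¹ := by
  have h : ρ.facePerm = ρ.toPerm * alphaP G := rfl
  rw [h, mul_inv_rev]
  rfl

theorem conn_fun [Fintype V] (h3 : IsKConnected 3 G) (X : Finset V) (hX : X.card < 3) {β : Type*}
    (f : V → β) (hf : ∀ u v, u ∉ X → v ∉ X → G.Adj u v → f u = f v) (u v : V)
    (hu : u ∉ X) (hv : v ∉ X) : f u = f v := by
  have hc := h3.2 X hX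
  have hu' : u ∈ ((↑X : Set V)ᶜ) := by simpa using hu
  have hv' : v ∈ ((↑X : Set V)ᶜ) := by simpa using hv
  obtain ⟨p⟩ := hc.preconnected ⟨u, hu'⟩ ⟨v, hv'⟩
  have key : ∀ (a b : ((↑X : Set V)ᶜ : Set V)) (_ : (G.induce ((↑X : Set V)ᶜ)).Walk a b),
      f a.1 = f b.1 := by
    intro a b p
    induction p with
    | nil => rfl
    | @cons a c b h p ih =>
      rw [← ih]
      refine hf _ _ ?_ ?_ h
      · exact fun hm => a.2 (Finset.mem_coe.2 hm)
      · exact fun hm => c.2 (Finset.mem_coe.2 hm)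
  exact key _ _ p

/-- every vertex has a neighbour outside any two given vertices. -/
theorem exists_dart_avoid [Fintype V] (h3 : IsKConnected 3 G) (v x y : V) :
    ∃ d : G.Dart, d.toProd.1 = v ∧ d.toProd.2 ≠ x ∧ d.toProd.2 ≠ y := by
  classical
  by_contra hcon
  push Not at hcon
  -- remove x and y (except v)
  have hcard : (({x, y} : Finset V).erase v).card < 3 :=
    lt_of_le_of_lt (Finset.card_le_card (Finset.erase_subset _ _))
      (lt_of_le_of_lt Finset.card_le_two (by norm_num))
  have hex : ∃ z : V, z ∉ ({v, x, y} : Finset V) := by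
    by_contra hall
    push Not at hall
    have : (Finset.univ : Finset V).card ≤ ({v, x, y} : Finset V).card :=
      Finset.card_le_card fun z _ => hall z
    have h4 := h3.1
    have h5 : ({v, x, y} : Finset V).card ≤ 3 := Finset.card_le_three
    rw [Finset.card_univ] at this
    omega
  obtain ⟨z, hz⟩ := hex
  simp only [Finset.mem_insert, Finset.mem_singleton, not_or] at hz
  have := conn_fun h3 _ hcard (fun u => u = v) (by
    intro a b ha hb hab
    simp only [Finset.mem_erase, Finset.mem_insert, Finset.mem_singleton, not_and, not_or] at ha hb
    by_cases hav : a = v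
    · subst hav
      have hbv : b ≠ a := hab.ne'
      have h1 := hcon ⟨(a, b), hab⟩ rfl
      have := hb hbv
      exact (this.2 (h1 this.1)).elim
    · by_cases hbv : b = v
      · subst hbv
        have h1 := hcon ⟨(b, a), hab.symm⟩ rfl
        have := ha hav
        exact (this.2 (h1 this.1)).elim
      · simp [hav, hbv]) v z (by simp) (by simp [hz])
  exact hz.1 (this.mp rfl)

theorem const_at (ρ : RotationSystem G) {β : Type*} (T : G.Dart → β) (z : V)
    (h : ∀ d : G.Dart, d.toProd.1 = z → T (ρ.toPerm d) = T d) (d d' : G.Dart)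
    (hd : d.toProd.1 = z) (hd' : d'.toProd.1 = z) : T d = T d' := by
  obtain ⟨n, rfl⟩ := ρ.single_orbit d d' (hd.trans hd'.symm)
  have key : ∀ n : ℕ, ((ρ.toPerm ^ n) d).toProd.1 = z ∧ T ((ρ.toPerm ^ n) d) = T d := by
    intro n
    induction n with
    | zero => exact ⟨hd, rfl⟩
    | succ n ih =>
      rw [pow_succ', Equiv.Perm.mul_apply]
      exact ⟨(ρ.fst_eq _).trans ih.1, (h _ ih.1).trans ih.2⟩
  exact (key n).2.symm

theorem inv_fst (ρ : RotationSystem G) (d : G.Dart) :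
    (ρ.toPerm⁻¹ d).toProd.1 = d.toProd.1 := by
  have := ρ.fst_eq (ρ.toPerm⁻¹ d)
  simpa using this.symm

theorem trans_fun [Fintype V] (h3 : IsKConnected 3 G) (ρ : RotationSystem G) {β : Type*}
    (T : G.Dart → β) (h1 : ∀ d, T (ρ.toPerm d) = T d) (h2 : ∀ d : G.Dart, T d.symm = T d)
    (d d' : G.Dart) : T d = T d' := by
  have hex : ∀ v : V, ∃ d : G.Dart, d.toProd.1 = v := fun v => by
    obtain ⟨d, hd, -⟩ := exists_dart_avoid h3 v v v
    exact ⟨d, hd⟩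
  choose k hk using hex
  have hc : ∀ d d' : G.Dart, d.toProd.1 = d'.toProd.1 → T d = T d' := fun d d' h =>
    const_at ρ T d'.toProd.1 (fun d _ => h1 d) d d' h rfl
  have := conn_fun h3 ∅ (by simp) (fun v => T (k v)) (by
    intro u v _ _ huv
    have e1 := hc (k u) ⟨(u, v), huv⟩ (hk u)
    have e2 := hc (k v) (⟨(u, v), huv⟩ : G.Dart).symm (hk v)
    change T (k u) = T (k v)
    rw [e1, e2, h2]) d.toProd.1 d'.toProd.1 (by simp) (by simp)
  rw [hc d (k d.toProd.1) (hk _).symm, hc d' (k d'.toProd.1) (hk _).symm]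
  exact this

theorem euler_bound [Fintype V] [Fintype G.Dart] (h3 : IsKConnected 3 G) (ρ : RotationSystem G)
    (hρ : ρ.IsPlanar) :
    Fintype.card G.Dart + 2 ≤ finrank (ZMod 2) (InvF ρ.toPerm) +
      finrank (ZMod 2) (InvF (alphaP G)) + finrank (ZMod 2) (InvF ρ.facePerm) := by
  classical
  have hex : ∀ v : V, ∃ d : G.Dart, d.toProd.1 = v := fun v => by
    obtain ⟨d, hd, -⟩ := exists_dart_avoid h3 v v v
    exact ⟨d, hd⟩
  have hVne : Nonempty V := by
    have := h3.1
    exact Fintype.card_pos_iff.1 (by omega)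
  obtain ⟨v0⟩ := hVne
  have hcc : ∀ u : V, G.connectedComponentMk u = G.connectedComponentMk v0 := fun u =>
    conn_fun h3 ∅ (by simp) (fun u => G.connectedComponentMk u)
      (fun u v _ _ huv => SimpleGraph.ConnectedComponent.sound huv.reachable) u v0
      (by simp) (by simp)
  have hp := hρ (G.connectedComponentMk v0) ((hex v0).imp fun d hd => by rw [hd])
  rw [Nat.card_congr (Equiv.subtypeUnivEquiv (fun x => hcc x)),
    Nat.card_congr (Equiv.subtypeUnivEquiv
      (fun q : Quotient ρ.faceSetoid => hcc q.out.toProd.1)),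
    Nat.card_congr (Equiv.subtypeUnivEquiv (fun d : G.Dart => hcc d.toProd.1)),
    Nat.card_eq_fintype_card, Nat.card_eq_fintype_card, Nat.card_eq_fintype_card] at hp
  -- vertices
  have hV : Fintype.card V ≤ finrank (ZMod 2) (InvF ρ.toPerm) := by
    let f : (V → ZMod 2) →ₗ[ZMod 2] InvF ρ.toPerm :=
      LinearMap.codRestrict _ (LinearMap.funLeft (ZMod 2) (ZMod 2) (fun d : G.Dart => d.toProd.1))
        (by intro c d; simp [LinearMap.funLeft, ρ.fst_eq])
    have := LinearMap.finrank_le_finrank_of_injective (f := f) (by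
      intro a b hab
      ext v
      obtain ⟨d, rfl⟩ := hex v
      exact congrFun (congrArg Subtype.val hab) d)
    simpa using this
  have hF : Fintype.card (Quotient ρ.faceSetoid) ≤ finrank (ZMod 2) (InvF ρ.facePerm) := by
    let f : (Quotient ρ.faceSetoid → ZMod 2) →ₗ[ZMod 2] InvF ρ.facePerm :=
      LinearMap.codRestrict _ (LinearMap.funLeft (ZMod 2) (ZMod 2)
        (fun d : G.Dart => Quotient.mk ρ.faceSetoid d))
        (by
          intro c d
          have : Quotient.mk ρ.faceSetoid (ρ.facePerm d) = Quotient.mk ρ.faceSetoid d :=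
            Quotient.sound (s := ρ.faceSetoid)
              (show ρ.facePerm.SameCycle _ _ from
                Equiv.Perm.sameCycle_apply_left.2 (Equiv.Perm.SameCycle.refl _ _))
          simp [LinearMap.funLeft, this])
    have := LinearMap.finrank_le_finrank_of_injective (f := f) (by
      intro a b hab
      ext q
      obtain ⟨d, rfl⟩ := Quotient.exists_rep q
      exact congrFun (congrArg Subtype.val hab) d)
    simpa using this
  have hA : Fintype.card G.Dart ≤ 2 * finrank (ZMod 2) (InvF (alphaP G)) := by
    have hrk := LinearMap.finrank_range_add_finrank_ker (deltaF (alphaP G))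
    have h1 : LinearMap.range (deltaF (alphaP G)) ≤ InvF (alphaP G) := by
      rintro _ ⟨T, rfl⟩ d
      simp [deltaF, alphaP_apply, add_comm]
    have h2 : LinearMap.ker (deltaF (alphaP G)) ≤ InvF (alphaP G) := by
      intro T hT d
      have h0 : T d + T (alphaP G d) = 0 := congrFun (LinearMap.mem_ker.1 hT) d
      exact (CharTwo.add_eq_zero.1 h0).symm
    have h1' := Submodule.finrank_mono h1
    have h2' := Submodule.finrank_mono h2
    simp at hrk
    omega
  omega

/-- Jordan curve lemma: the boundary of a face of the first map bounds, in the second map, a set of faces `T`. -/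
theorem jordan [Fintype V] (h3 : IsKConnected 3 G) (ρ ρ' : RotationSystem G)
    (hρ' : ρ'.IsPlanar) (s : G.Dart → ZMod 2) (hs : ∀ d, s (ρ.facePerm d) = s d) :
    ∃ T : G.Dart → ZMod 2, (∀ d : G.Dart, T (ρ'.toPerm d) = T d.symm) ∧
      ∀ d : G.Dart, s d + s d.symm = T d + T d.symm := by
  classical
  have hf : Finite G.Dart := Finite.of_injective _ SimpleGraph.Dart.toProd_injective
  have := Fintype.ofFinite G.Dart
  have hE := euler_bound h3 ρ' hρ'
  obtain ⟨T, hT1, hT2⟩ := core ρ'.toPerm (alphaP G) ρ'.facePerm⁻¹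
    (by rw [facePerm_inv]; simp) (fun T h1 h2 => trans_fun h3 ρ' T h1 h2)
    (by rw [InvF_inv]; omega) (fun d => s d + s d.symm)
    (by
      intro g hg
      have hg2 : ∀ d, g (ρ.toPerm d) = g d := fun d =>
        const_at ρ' g d.toProd.1 (fun d _ => hg d) _ _ (ρ.fst_eq d) rfl
      have : ∑ d : G.Dart, s d.symm * g d = ∑ d, s d * g d := by
        rw [← Equiv.sum_comp ρ.toPerm (fun d => s d * g d)]
        refine Finset.sum_congr rfl fun d _ => ?_
        rw [hg2 d]
        have := hs d.symm
        rw [facePerm_apply, d.symm_symm] at this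
        rw [this]
      simp only [add_mul, Finset.sum_add_distrib]
      rw [this, zmod2_add_self])
    (by
      intro g hg
      refine Finset.sum_involution (fun d _ => d.symm) ?_ ?_ ?_ ?_
      · intro d _
        have : g d.symm = g d := hg d
        rw [this, d.symm_symm, add_comm (s d.symm), zmod2_add_self]
      · intro d _ _
        exact d.symm_ne
      · intro d _
        exact Finset.mem_univ _
      · intro d _
        exact d.symm_symm)
  have hT3 : ∀ d : G.Dart, T (ρ'.toPerm d) = T d.symm := by
    intro d
    have := hT1 (ρ'.facePerm d.symm)
    rw [← Equiv.Perm.mul_apply, inv_mul_cancel, Equiv.Perm.one_apply, facePerm_apply,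
      d.symm_symm] at this
    exact this.symm
  exact ⟨T, hT3, fun d => by rw [← hT3]; exact hT2 d⟩

theorem curve [Fintype V] [Fintype G.Dart] (h3 : IsKConnected 3 G) (ρ : RotationSystem G)
    (hρ : ρ.IsPlanar) (γ : G.Dart → ZMod 2)
    (h1 : ∀ g : G.Dart → ZMod 2, (∀ d d' : G.Dart, d.toProd.1 = d'.toProd.1 → g d = g d') →
      ∑ d, γ d * g d = 0)
    (h2 : ∀ g : G.Dart → ZMod 2, (∀ d d' : G.Dart, ρ.facePerm.SameCycle d d' → g d = g d') →
      ∑ d, γ d * g d = 0) :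
    ∃ T : G.Dart → ZMod 2, (∀ d : G.Dart, T d.symm = T d) ∧
      ∀ d : G.Dart, γ d = T d + T (ρ.toPerm⁻¹ d) := by
  classical
  have hE := euler_bound h3 ρ hρ
  refine core ρ.toPerm⁻¹ ρ.facePerm⁻¹ (alphaP G) (facePerm_inv ρ) ?_
    (by rw [InvF_inv, InvF_inv]; omega) γ ?_ ?_
  · intro T hT1 hT2
    have hs : T ∈ InvF ρ.toPerm := by rw [← InvF_inv]; exact hT1
    have hs' : T ∈ InvF ρ.facePerm := by rw [← InvF_inv]; exact hT2
    refine trans_fun h3 ρ T hs fun d => ?_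
    have h5 := hs' d
    rw [facePerm_apply, hs] at h5
    exact h5
  · intro g hg
    have hs : g ∈ InvF ρ.toPerm := by rw [← InvF_inv]; exact hg
    exact h1 g fun d d' h => const_at ρ g d'.toProd.1 (fun d _ => hs d) d d' h rfl
  · intro g hg
    have hs : g ∈ InvF ρ.facePerm := by rw [← InvF_inv]; exact hg
    refine h2 g ?_
    rintro d d' h
    obtain ⟨n, rfl⟩ := h.exists_nat_pow_eq
    have key : ∀ n : ℕ, g ((ρ.facePerm ^ n) d) = g d := by
      intro n
      induction n with
      | zero => rfl
      | succ n ih => rw [pow_succ', Equiv.Perm.mul_apply, hs, ih]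
    exact (key n).symm

/-- If `T` has no jumps outside `X`, it is constant on darts starting outside `X`. -/
theorem const_outside [Fintype V] (h3 : IsKConnected 3 G) (ρ : RotationSystem G)
    (X : Finset V) (hX : X.card < 3)
    (T : G.Dart → ZMod 2) (hT : ∀ d : G.Dart, T d.symm = T d)
    (hT2 : ∀ d : G.Dart, d.toProd.1 ∉ X → T d = T (ρ.toPerm⁻¹ d)) (d d' : G.Dart)
    (hd : d.toProd.1 ∉ X) (hd' : d'.toProd.1 ∉ X) : T d = T d' := by
  have hex : ∀ v : V, ∃ d : G.Dart, d.toProd.1 = v := fun v => by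
    obtain ⟨d, hd, -⟩ := exists_dart_avoid h3 v v v
    exact ⟨d, hd⟩
  choose k hk using hex
  have hc : ∀ d d' : G.Dart, d.toProd.1 = d'.toProd.1 → d.toProd.1 ∉ X → T d = T d' :=
    fun d d' h hn => const_at ρ T d'.toProd.1 (fun e he => by
      have := hT2 (ρ.toPerm e) (by rw [ρ.fst_eq, he, ← h]; exact hn)
      simpa using this) d d' h rfl
  have := conn_fun h3 X hX (fun v => T (k v)) (by
    intro u v hu hv huv
    have e1 := hc (k u) ⟨(u, v), huv⟩ (hk u) (by rw [hk]; exact hu)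
    have e2 := hc (k v) (⟨(u, v), huv⟩ : G.Dart).symm (hk v) (by rw [hk]; exact hv)
    change T (k u) = T (k v)
    rw [e1, e2, hT]) d.toProd.1 d'.toProd.1 hd hd'
  rw [hc d (k d.toProd.1) (hk _).symm hd, hc d' (k d'.toProd.1) (hk _).symm hd']
  exact this

theorem face_simple [Fintype V] (h3 : IsKConnected 3 G) (ρ : RotationSystem G)
    (hρ : ρ.IsPlanar) (g g' : G.Dart) (hgg : g.toProd.1 = g'.toProd.1)
    (hf : ρ.facePerm.SameCycle g g') : g = g' := by
  classical
  by_contra hne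
  have hf' : Finite G.Dart := Finite.of_injective _ SimpleGraph.Dart.toProd_injective
  have := Fintype.ofFinite G.Dart
  obtain ⟨T, hT1, hT2⟩ := curve h3 ρ hρ (fun d => (if d = g then 1 else 0) + if d = g' then 1 else 0)
    (by
      intro h hh
      simp [add_mul, Finset.sum_add_distrib, hh g g' hgg, zmod2_add_self])
    (by
      intro h hh
      simp [add_mul, Finset.sum_add_distrib, hh g g' hf, zmod2_add_self])
  have hc := const_outside h3 ρ {g.toProd.1} (by simp) T hT1 (by
    intro d hd
    simp only [Finset.mem_singleton] at hd
    have hd1 : d ≠ g := by rintro rfl; exact hd rfl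
    have hd2 : d ≠ g' := by rintro rfl; exact hd hgg.symm
    have := hT2 d
    simp only [hd1, hd2, if_false, add_zero] at this
    exact CharTwo.add_eq_zero.1 this.symm)
  have hall : ∀ d : G.Dart, T d = T g.symm := by
    intro d
    by_cases hd : d.toProd.1 = g.toProd.1
    · rw [← hT1 d]
      refine hc _ _ ?_ ?_
      · simp only [Finset.mem_singleton]
        rw [← hd]
        exact d.snd_ne_fst
      · simp only [Finset.mem_singleton]
        exact g.snd_ne_fst
    · refine hc _ _ ?_ ?_
      · simpa using hd
      · simp only [Finset.mem_singleton]
        exact g.snd_ne_fst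
  have := hT2 g
  rw [hall g, hall (ρ.toPerm⁻¹ g), zmod2_add_self] at this
  simp [hne] at this

theorem face_two [Fintype V] (h3 : IsKConnected 3 G) (ρ : RotationSystem G)
    (hρ : ρ.IsPlanar) (u v : V) (huv : u ≠ v) (g g' h h' : G.Dart)
    (hg : g.toProd.1 = v) (hg' : g'.toProd.1 = v) (hh : h.toProd.1 = u) (hh' : h'.toProd.1 = u)
    (hgg : g ≠ g') (hf : ρ.facePerm.SameCycle g h) (hf' : ρ.facePerm.SameCycle g' h') :
    (g.toProd.2 = u ∧ g' = ρ.toPerm g) ∨ (g'.toProd.2 = u ∧ g = ρ.toPerm g') := by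
  classical
  have hfin : Finite G.Dart := Finite.of_injective _ SimpleGraph.Dart.toProd_injective
  have := Fintype.ofFinite G.Dart
  obtain ⟨T, hT1, hT2⟩ := curve h3 ρ hρ (fun d => ((if d = g then 1 else 0) +
      if d = g' then 1 else 0) + ((if d = h then 1 else 0) + if d = h' then 1 else 0))
    (by
      intro k hk
      simp [add_mul, Finset.sum_add_distrib, hk g g' (hg.trans hg'.symm),
        hk h h' (hh.trans hh'.symm), zmod2_add_self])
    (by
      intro k hk
      simp [add_mul, Finset.sum_add_distrib, hk g h hf, hk g' h' hf', zmod2_add_self])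
  have hc := const_outside h3 ρ {u, v} (lt_of_le_of_lt Finset.card_le_two (by norm_num)) T hT1 (by
    intro d hd
    simp only [Finset.mem_insert, Finset.mem_singleton, not_or] at hd
    have hd1 : d ≠ g := by rintro rfl; exact hd.2 hg
    have hd2 : d ≠ g' := by rintro rfl; exact hd.2 hg'
    have hd3 : d ≠ h := by rintro rfl; exact hd.1 hh
    have hd4 : d ≠ h' := by rintro rfl; exact hd.1 hh'
    have := hT2 d
    simp only [hd1, hd2, hd3, hd4, if_false, add_zero] at this
    exact CharTwo.add_eq_zero.1 this.symm)
  obtain ⟨d0, hd0, hd0u, -⟩ := exists_dart_avoid h3 v u u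
  have hv : ∀ d : G.Dart, d.toProd.1 = v → d.toProd.2 ≠ u → T d = T d0 := by
    intro d hd hdu
    rw [← hT1 d, ← hT1 d0]
    refine hc _ _ ?_ ?_
    · simp only [Finset.mem_insert, Finset.mem_singleton, not_or]
      refine ⟨hdu, ?_⟩
      rw [← hd]
      exact d.snd_ne_fst
    · simp only [Finset.mem_insert, Finset.mem_singleton, not_or]
      refine ⟨hd0u, ?_⟩
      rw [← hd0]
      exact d0.snd_ne_fst
  have huniq : ∀ d d' : G.Dart, d.toProd.1 = v → d'.toProd.1 = v → d.toProd.2 = u →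
      d'.toProd.2 = u → d = d' := by
    intro d d' h1 h2 h3 h4
    exact SimpleGraph.Dart.ext _ _ (Prod.ext (h1.trans h2.symm) (h3.trans h4.symm))
  have hgh : g ≠ h := by rintro rfl; exact huv (hh.symm.trans hg)
  have hgh' : g ≠ h' := by rintro rfl; exact huv (hh'.symm.trans hg)
  have hgh2 : g' ≠ h := by rintro rfl; exact huv (hh.symm.trans hg')
  have hgh2' : g' ≠ h' := by rintro rfl; exact huv (hh'.symm.trans hg')
  have j1 := hT2 g
  have j2 := hT2 g'
  simp only [hgg, hgg.symm, hgh, hgh', hgh2, hgh2', if_true, if_false, add_zero, zero_add] at j1 j2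
  have i1 : (ρ.toPerm⁻¹ g).toProd.1 = v := (inv_fst ρ g).trans hg
  have i2 : (ρ.toPerm⁻¹ g').toProd.1 = v := (inv_fst ρ g').trans hg'
  have k1 : g.toProd.2 ≠ u → (ρ.toPerm⁻¹ g).toProd.2 = u := by
    intro a
    by_contra b
    rw [hv g hg a, hv _ i1 b, zmod2_add_self] at j1
    exact one_ne_zero j1
  have k2 : g'.toProd.2 ≠ u → (ρ.toPerm⁻¹ g').toProd.2 = u := by
    intro a
    by_contra b
    rw [hv g' hg' a, hv _ i2 b, zmod2_add_self] at j2
    exact one_ne_zero j2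
  by_cases c1 : g.toProd.2 = u
  · left
    refine ⟨c1, ?_⟩
    have c2 : g'.toProd.2 ≠ u := fun c => hgg (huniq _ _ hg hg' c1 c)
    have := huniq _ _ hg i2 c1 (k2 c2)
    rw [this]
    simp
  · right
    have c2 : g'.toProd.2 = u := by
      by_contra c
      have := huniq _ _ i1 i2 (k1 c1) (k2 c)
      exact hgg (ρ.toPerm⁻¹.injective this)
    refine ⟨c2, ?_⟩
    have := huniq _ _ hg' i1 c2 (k1 c1)
    rw [this]
    simp

theorem rot_ne [Fintype V] (h3 : IsKConnected 3 G) (ρ : RotationSystem G) (d : G.Dart) :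
    ρ.toPerm d ≠ d ∧ ρ.toPerm (ρ.toPerm d) ≠ d := by
  obtain ⟨d', hd', h1, h2⟩ :=
    exists_dart_avoid h3 d.toProd.1 d.toProd.2 (ρ.toPerm d).toProd.2
  have hd1 : d' ≠ d := by rintro rfl; exact h1 rfl
  have hd2 : d' ≠ ρ.toPerm d := by rintro rfl; exact h2 rfl
  obtain ⟨n, hn⟩ := ρ.single_orbit d d' hd'.symm
  have hss : ρ.toPerm (ρ.toPerm d) ≠ d := by
    intro h
    have key : ∀ n : ℕ, (ρ.toPerm ^ n) d = d ∨ (ρ.toPerm ^ n) d = ρ.toPerm d := by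
      intro n
      induction n with
      | zero => left; rfl
      | succ n ih =>
        rw [pow_succ', Equiv.Perm.mul_apply]
        rcases ih with ih | ih
        · right; rw [ih]
        · left; rw [ih, h]
    rcases key n with h' | h'
    · exact hd1 (hn.symm.trans h')
    · exact hd2 (hn.symm.trans h')
  refine ⟨fun h => hss ?_, hss⟩
  rw [h, h]

open Classical in
/-- Indicator of the face of `e`. -/
noncomputable def faceInd (ρ : RotationSystem G) (e d : G.Dart) : ZMod 2 :=
  if ρ.facePerm.SameCycle e d then 1 else 0

theorem faceInd_inv (ρ : RotationSystem G) (e d : G.Dart) :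
    faceInd ρ e (ρ.facePerm d) = faceInd ρ e d := by
  unfold faceInd
  by_cases hd : ρ.facePerm.SameCycle e d
  · rw [if_pos hd, if_pos (Equiv.Perm.sameCycle_apply_right.2 hd)]
  · rw [if_neg hd, if_neg (fun h => hd (Equiv.Perm.sameCycle_apply_right.1 h))]

theorem faceInd_symm (ρ : RotationSystem G) (e d : G.Dart) :
    faceInd ρ e d.symm = faceInd ρ e (ρ.toPerm d) := by
  rw [← faceInd_inv, facePerm_apply, d.symm_symm]

open Classical in
theorem faceInd_at [Fintype V] (h3 : IsKConnected 3 G) (ρ : RotationSystem G)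
    (hρ : ρ.IsPlanar) (e e' d : G.Dart) (he : ρ.facePerm.SameCycle e e')
    (hd : d.toProd.1 = e'.toProd.1) : faceInd ρ e d = if d = e' then 1 else 0 := by
  unfold faceInd
  by_cases h : d = e'
  · subst h; simp [he]
  · have : ¬ ρ.facePerm.SameCycle e d := fun h' =>
      h (face_simple h3 ρ hρ d e' hd (h'.symm.trans he))
    simp [h, this]

theorem faceInd_off (ρ : RotationSystem G) (e d : G.Dart)
    (hd : ∀ e', ρ.facePerm.SameCycle e e' → e'.toProd.1 ≠ d.toProd.1) :
    faceInd ρ e d = 0 := by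
  unfold faceInd
  rw [if_neg]
  intro h
  exact hd d h rfl

/-- Off the face of `e`, the function `T` has no jumps. -/
theorem off_jump (ρ ρ' : RotationSystem G) (e : G.Dart) (T : G.Dart → ZMod 2)
    (hT1 : ∀ d : G.Dart, T (ρ'.toPerm d) = T d.symm)
    (hT2 : ∀ d : G.Dart, faceInd ρ e d + faceInd ρ e d.symm = T d + T d.symm) (d : G.Dart)
    (hd : ∀ e', ρ.facePerm.SameCycle e e' → e'.toProd.1 ≠ d.toProd.1) :
    T d.symm = T d ∧ ∀ d' : G.Dart, d'.toProd.1 = d.toProd.1 → T d' = T d := by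
  have key : ∀ d' : G.Dart, d'.toProd.1 = d.toProd.1 → T d'.symm = T d' := by
    intro d' hd'
    have h := hT2 d'
    rw [faceInd_symm, faceInd_off ρ e d' (by rw [hd']; exact hd),
      faceInd_off ρ e (ρ.toPerm d') (by rw [ρ.fst_eq, hd']; exact hd), add_zero] at h
    exact (CharTwo.add_eq_zero.1 h.symm).symm
  refine ⟨key d rfl, fun d' hd' => const_at ρ' T d.toProd.1 (fun k hk => ?_) d' d hd' rfl⟩
  rw [hT1, key k hk]

theorem same_cycle_induct (ρ : RotationSystem G) [Finite G.Dart] (P : G.Dart → Prop) (h0 : G.Dart)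
    (base : P h0) (step : ∀ h, ρ.facePerm.SameCycle h0 h → P h → P (ρ.facePerm h)) (h : G.Dart)
    (hh : ρ.facePerm.SameCycle h0 h) : P h := by
  obtain ⟨n, rfl⟩ := hh.exists_nat_pow_eq
  have key : ∀ n : ℕ, ρ.facePerm.SameCycle h0 ((ρ.facePerm ^ n) h0) ∧ P ((ρ.facePerm ^ n) h0) := by
    intro n
    induction n with
    | zero => exact ⟨Equiv.Perm.SameCycle.refl _ _, base⟩
    | succ n ih =>
      rw [pow_succ', Equiv.Perm.mul_apply]
      exact ⟨Equiv.Perm.sameCycle_apply_right.2 ih.1, step _ ih.1 ih.2⟩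
  exact (key n).2

theorem step1 [Fintype V] (h3 : IsKConnected 3 G) (ρ ρ' : RotationSystem G)
    (hρ : ρ.IsPlanar) (hρ' : ρ'.IsPlanar) (d : G.Dart) :
    ρ'.toPerm d = ρ.toPerm d ∨ ρ'.toPerm (ρ.toPerm d) = d := by
  classical
  have hfin : Finite G.Dart := Finite.of_injective _ SimpleGraph.Dart.toProd_injective
  by_contra hcon
  push Not at hcon
  obtain ⟨hc1, hc2⟩ := hcon
  set e := ρ.toPerm d with he
  have hev : e.toProd.1 = d.toProd.1 := ρ.fst_eq d
  have hed : e ≠ d := (rot_ne h3 ρ d).1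
  have hse : ρ.toPerm e ≠ d := (rot_ne h3 ρ d).2
  obtain ⟨T, hT1, hT2⟩ := jordan h3 ρ ρ' hρ' (faceInd ρ e) (faceInd_inv ρ e)
  -- values at v
  have hv : ∀ g : G.Dart, g.toProd.1 = d.toProd.1 →
      T g + T (ρ'.toPerm g) = (if g = e then 1 else 0) + if g = d then 1 else 0 := by
    intro g hg
    rw [hT1, ← hT2, faceInd_symm,
      faceInd_at h3 ρ hρ e e g (Equiv.Perm.SameCycle.refl _ _) (hg.trans hev.symm),
      faceInd_at h3 ρ hρ e e (ρ.toPerm g) (Equiv.Perm.SameCycle.refl _ _)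
        ((ρ.fst_eq g).trans (hg.trans hev.symm))]
    congr 1
    simp [he]
  have hv0 : ∀ g : G.Dart, g.toProd.1 = d.toProd.1 → g ≠ d → g ≠ e → T (ρ'.toPerm g) = T g := by
    intro g hg h1 h2
    have := hv g hg
    simp only [h1, h2, if_false, add_zero] at this
    exact (CharTwo.add_eq_zero.1 this).symm
  -- face argument
  have hface : ∀ p : G.Dart, p.toProd.1 = d.toProd.1 → p ≠ d → p ≠ e → ρ.toPerm p ≠ d →
      ρ.toPerm p ≠ e → T (ρ.toPerm p) = T p := by
    intro p hp hpd hpe hspd hspe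
    have hspv : (ρ.toPerm p).toProd.1 = d.toProd.1 := (ρ.fst_eq p).trans hp
    have hoff : ∀ h, ρ.facePerm.SameCycle (ρ.toPerm p) h → h.toProd.1 ≠ d.toProd.1 →
        ∀ e', ρ.facePerm.SameCycle e e' → e'.toProd.1 ≠ h.toProd.1 := by
      intro h hh hne e' he' heq
      rcases face_two h3 ρ hρ h.toProd.1 d.toProd.1 hne e (ρ.toPerm p) e' h hev hspv heq rfl
        hspe.symm he' hh with ⟨_, h2⟩ | ⟨_, h2⟩
      · exact hpe (ρ.toPerm.injective h2)
      · exact hspd (ρ.toPerm.injective (h2.symm.trans he))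
    have hat : ∀ h, ρ.facePerm.SameCycle (ρ.toPerm p) h → h.toProd.1 = d.toProd.1 →
        h = ρ.toPerm p := by
      intro h hh hh1
      exact face_simple h3 ρ hρ h _ (hh1.trans hspv.symm) hh.symm
    have hall := same_cycle_induct ρ (fun h => T h = T (ρ.toPerm p)) (ρ.toPerm p) rfl (by
      intro h hh hTh
      have hh' : ρ.facePerm.SameCycle (ρ.toPerm p) (ρ.facePerm h) :=
        Equiv.Perm.sameCycle_apply_right.2 hh
      have e1 : T h.symm = T h := by
        by_cases hz : h.toProd.1 = d.toProd.1
        · rw [hat h hh hz, ← hT1]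
          exact hv0 _ hspv hspd hspe
        · exact (off_jump ρ ρ' e T hT1 hT2 h (hoff h hh hz)).1
      by_cases hz : (ρ.facePerm h).toProd.1 = d.toProd.1
      · change T (ρ.facePerm h) = _
        rw [hat _ hh' hz]
      · have e2 := (off_jump ρ ρ' e T hT1 hT2 _ (hoff _ hh' hz)).2 h.symm (ρ.fst_eq h.symm).symm
        change T (ρ.facePerm h) = _
        rw [← e2, e1, hTh])
    have hps : ρ.facePerm.SameCycle (ρ.toPerm p) p.symm := by
      have : ρ.facePerm p.symm = ρ.toPerm p := by rw [facePerm_apply, p.symm_symm]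
      rw [← this]
      exact Equiv.Perm.sameCycle_apply_left.2 (Equiv.Perm.SameCycle.refl _ _)
    have h1 : T p.symm = T (ρ.toPerm p) := hall _ hps
    rw [← h1, ← hT1, hv0 p hp hpd hpe]
  have hconst : ∀ n : ℕ, ((ρ.toPerm ^ n) e).toProd.1 = d.toProd.1 ∧
      ((ρ.toPerm ^ n) e = d ∨ (ρ.toPerm ^ n) e = e ∨
      T ((ρ.toPerm ^ n) e) = T (ρ.toPerm e)) := by
    intro n
    induction n with
    | zero => exact ⟨hev, Or.inr (Or.inl rfl)⟩
    | succ n ih =>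
      rw [pow_succ', Equiv.Perm.mul_apply]
      set p := (ρ.toPerm ^ n) e
      refine ⟨(ρ.fst_eq p).trans ih.1, ?_⟩
      by_cases k1 : p = d
      · right; left; rw [k1]
      by_cases k2 : p = e
      · right; right; rw [k2]
      by_cases k3 : ρ.toPerm p = d
      · left; exact k3
      by_cases k4 : ρ.toPerm p = e
      · right; left; exact k4
      right; right
      rw [hface p ih.1 k1 k2 k3 k4]
      rcases ih.2 with h | h | h
      · exact (k1 h).elim
      · exact (k2 h).elim
      · exact h
  have ht0 : ∀ g : G.Dart, g.toProd.1 = d.toProd.1 → g ≠ d → g ≠ e → T g = T (ρ.toPerm e) := by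
    intro g hg h1 h2
    obtain ⟨n, rfl⟩ := ρ.single_orbit e g (hev.trans hg.symm)
    rcases (hconst n).2 with h | h | h
    · exact (h1 h).elim
    · exact (h2 h).elim
    · exact h
  have hd1 : T (ρ'.toPerm d) = T (ρ.toPerm e) :=
    ht0 _ (ρ'.fst_eq d) (rot_ne h3 ρ' d).1 hc1
  have hd2 : T (ρ'.toPerm⁻¹ d) = T (ρ.toPerm e) := by
    refine ht0 _ (inv_fst ρ' d) ?_ ?_
    · intro h
      apply (rot_ne h3 ρ' d).1
      conv_lhs => rw [← h]
      simp
    · intro h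
      apply hc2
      rw [← h]
      simp
  have hd3 : T d = T (ρ'.toPerm⁻¹ d) := by
    have := hv0 (ρ'.toPerm⁻¹ d) (inv_fst ρ' d) (by
      intro h
      apply (rot_ne h3 ρ' d).1
      conv_lhs => rw [← h]
      simp) (by
      intro h
      apply hc2
      rw [← h]
      simp)
    simpa using this
  have hd4 := hv d rfl
  rw [hd1, hd3, hd2, zmod2_add_self] at hd4
  simp [hed.symm] at hd4

theorem step1_prop [Fintype V] (h3 : IsKConnected 3 G) (ρ ρ' : RotationSystem G)
    (hρ : ρ.IsPlanar) (hρ' : ρ'.IsPlanar) (d : G.Dart)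
    (hd : ρ'.toPerm d = ρ.toPerm d) : ρ'.toPerm (ρ.toPerm d) = ρ.toPerm (ρ.toPerm d) := by
  rcases step1 h3 ρ ρ' hρ hρ' (ρ.toPerm d) with h | h
  · exact h
  · exfalso
    rw [← hd] at h
    have := ρ'.toPerm.injective h
    rw [hd] at this
    exact (rot_ne h3 ρ d).2 this

theorem good_at [Fintype V] (h3 : IsKConnected 3 G) (ρ ρ' : RotationSystem G)
    (hρ : ρ.IsPlanar) (hρ' : ρ'.IsPlanar) (d d' : G.Dart) (hdd : d.toProd.1 = d'.toProd.1)
    (hd : ρ'.toPerm d = ρ.toPerm d) : ρ'.toPerm d' = ρ.toPerm d' := by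
  obtain ⟨n, rfl⟩ := ρ.single_orbit d d' hdd
  clear hdd
  induction n with
  | zero => exact hd
  | succ n ih =>
    rw [pow_succ', Equiv.Perm.mul_apply]
    exact step1_prop h3 ρ ρ' hρ hρ' _ ih

theorem step2 [Fintype V] (h3 : IsKConnected 3 G) (ρ ρ' : RotationSystem G)
    (hρ : ρ.IsPlanar) (hρ' : ρ'.IsPlanar) (e : G.Dart)
    (hd : ρ'.toPerm e = ρ.toPerm e) : ρ'.toPerm e.symm = ρ.toPerm e.symm := by
  classical
  have hfin : Finite G.Dart := Finite.of_injective _ SimpleGraph.Dart.toProd_injective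
  by_contra hbad
  -- bad everywhere at u
  set y := ρ.toPerm⁻¹ e.symm with hy
  have hyu : y.toProd.1 = e.symm.toProd.1 := inv_fst ρ _
  have hsy : ρ.toPerm y = e.symm := by simp [hy]
  have hy' : ρ'.toPerm e.symm = y := by
    rcases step1 h3 ρ ρ' hρ hρ' y with h | h
    · exact (hbad (good_at h3 ρ ρ' hρ hρ' y e.symm hyu h)).elim
    · rwa [hsy] at h
  have huv : e.symm.toProd.1 ≠ e.toProd.1 := e.snd_ne_fst
  set x := ρ.toPerm e with hx
  have hxv : x.toProd.1 = e.toProd.1 := ρ.fst_eq e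
  have hxe : x ≠ e := (rot_ne h3 ρ e).1
  have hxx : ρ.toPerm x ≠ e := (rot_ne h3 ρ e).2
  obtain ⟨T, hT1, hT2⟩ := jordan h3 ρ ρ' hρ' (faceInd ρ e) (faceInd_inv ρ e)
  have hLu : ρ.facePerm.SameCycle e (ρ.toPerm e.symm) :=
    Equiv.Perm.sameCycle_apply_right.2 (Equiv.Perm.SameCycle.refl ρ.facePerm e)
  have hv : ∀ g : G.Dart, g.toProd.1 = e.toProd.1 →
      T g + T g.symm = (if g = e then 1 else 0) + if ρ.toPerm g = e then 1 else 0 := by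
    intro g hg
    rw [← hT2, faceInd_symm,
      faceInd_at h3 ρ hρ e e g (Equiv.Perm.SameCycle.refl _ _) hg,
      faceInd_at h3 ρ hρ e e (ρ.toPerm g) (Equiv.Perm.SameCycle.refl _ _)
        ((ρ.fst_eq g).trans hg)]
  have hu : ∀ g : G.Dart, g.toProd.1 = e.symm.toProd.1 →
      T g + T g.symm = (if g = ρ.toPerm e.symm then 1 else 0) + if g = e.symm then 1 else 0 := by
    intro g hg
    rw [← hT2, faceInd_symm,
      faceInd_at h3 ρ hρ e (ρ.toPerm e.symm) g hLu (hg.trans (ρ.fst_eq _).symm),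
      faceInd_at h3 ρ hρ e (ρ.toPerm e.symm) (ρ.toPerm g) hLu
        ((ρ.fst_eq g).trans (hg.trans (ρ.fst_eq _).symm))]
    congr 1
    simp
  -- the face R of e.symm
  have hxR : ρ.facePerm.SameCycle x e.symm := by
    have : ρ.facePerm e.symm = x := by rw [facePerm_apply, e.symm_symm]
    rw [← this]
    exact Equiv.Perm.sameCycle_apply_left.2 (Equiv.Perm.SameCycle.refl _ _)
  have hatv : ∀ h, ρ.facePerm.SameCycle x h → h.toProd.1 = e.toProd.1 → h = x :=
    fun h hh h1 => face_simple h3 ρ hρ h x (h1.trans hxv.symm) hh.symm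
  have hatu : ∀ h, ρ.facePerm.SameCycle x h → h.toProd.1 = e.symm.toProd.1 → h = e.symm :=
    fun h hh h1 => face_simple h3 ρ hρ h e.symm h1 (hh.symm.trans hxR)
  have hoff : ∀ h, ρ.facePerm.SameCycle x h → h.toProd.1 ≠ e.toProd.1 →
      h.toProd.1 ≠ e.symm.toProd.1 →
        ∀ e', ρ.facePerm.SameCycle e e' → e'.toProd.1 ≠ h.toProd.1 := by
    intro h hh hne hne2 e' he' heq
    rcases face_two h3 ρ hρ h.toProd.1 e.toProd.1 hne e x e' h rfl hxv heq rfl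
      hxe.symm he' hh with ⟨h2, _⟩ | ⟨_, h2⟩
    · exact hne2 h2.symm
    · exact hxx h2.symm
  have hxsymm : T x.symm = T x := by
    have := hv x hxv
    simp only [hxe, hxx, if_false, add_zero] at this
    exact (CharTwo.add_eq_zero.1 this).symm
  have hall := same_cycle_induct ρ (fun h => h = e.symm ∨ T h = T x) x (Or.inr rfl) (by
    intro h hh hTh
    have hh' : ρ.facePerm.SameCycle x (ρ.facePerm h) := Equiv.Perm.sameCycle_apply_right.2 hh
    by_cases hz : (ρ.facePerm h).toProd.1 = e.toProd.1
    · right; rw [hatv _ hh' hz]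
    by_cases hz2 : (ρ.facePerm h).toProd.1 = e.symm.toProd.1
    · left; exact hatu _ hh' hz2
    right
    have e2 := (off_jump ρ ρ' e T hT1 hT2 _ (hoff _ hh' hz hz2)).2 h.symm (ρ.fst_eq h.symm).symm
    rw [← e2]
    rcases hTh with rfl | hTh
    · exfalso
      apply hz
      rw [facePerm_apply, ρ.fst_eq, e.symm_symm]
    · by_cases w1 : h.toProd.1 = e.toProd.1
      · rw [hatv h hh w1, hxsymm]
      · by_cases w2 : h.toProd.1 = e.symm.toProd.1
        · exfalso
          apply hz
          rw [hatu h hh w2, facePerm_apply, ρ.fst_eq, e.symm_symm]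
        · rw [(off_jump ρ ρ' e T hT1 hT2 h (hoff h hh w1 w2)).1, hTh])
  have hyne : y ≠ e.symm := by
    intro h
    have := hsy
    rw [h] at this
    exact (rot_ne h3 ρ e.symm).1 this
  have hyne2 : y ≠ ρ.toPerm e.symm := by
    intro h
    have := hsy
    rw [h] at this
    exact (rot_ne h3 ρ e.symm).2 this
  have hysymm : T y.symm = T y := by
    have := hu y hyu
    simp only [hyne, hyne2, if_false, add_zero] at this
    exact (CharTwo.add_eq_zero.1 this).symm
  have hyR : ρ.facePerm.SameCycle x y.symm := by
    refine Equiv.Perm.sameCycle_apply_right.1 ?_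
    rw [facePerm_apply, y.symm_symm, hsy]
    exact hxR
  have hTy : T y = T x := by
    rcases hall y.symm hyR with h | h
    · exfalso
      have hye : y = e := by rw [← y.symm_symm, h, e.symm_symm]
      rw [hye] at hyu
      exact huv hyu.symm
    · rw [← hysymm, h]
  have hx1 : T x = T e.symm := by rw [← hT1, hd]
  have hy1 : T y = T e := by rw [← hy', hT1, e.symm_symm]
  have hee := hv e rfl
  rw [← hx1, ← hy1, hTy, zmod2_add_self] at hee
  simp [← hx, hxe] at hee

theorem whitney [Fintype V] (h3 : IsKConnected 3 G) (ρ ρ' : RotationSystem G)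
    (hρ : ρ.IsPlanar) (hρ' : ρ'.IsPlanar) :
    ρ'.toPerm = ρ.toPerm ∨ ρ'.toPerm = ρ.toPerm⁻¹ := by
  have hP := trans_fun h3 ρ (fun d => ρ'.toPerm d = ρ.toPerm d)
    (by
      intro d
      exact propext ⟨fun h => good_at h3 ρ ρ' hρ hρ' _ _ (ρ.fst_eq d) h,
        fun h => step1_prop h3 ρ ρ' hρ hρ' d h⟩)
    (by
      intro d
      refine propext ⟨fun h => ?_, fun h => step2 h3 ρ ρ' hρ hρ' d h⟩
      have := step2 h3 ρ ρ' hρ hρ' d.symm h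
      rwa [d.symm_symm] at this)
  by_cases hex : ∃ d, ρ'.toPerm d = ρ.toPerm d
  · left
    obtain ⟨d, hd⟩ := hex
    ext1 d'
    exact (hP d d').mp hd
  · right
    push Not at hex
    ext1 d
    rcases step1 h3 ρ ρ' hρ hρ' (ρ.toPerm⁻¹ d) with h | h
    · exact (hex _ h).elim
    · simpa using h

end Graph

theorem RestrictMapsTo.unique {α : Type*} {σ : Equiv.Perm α} {S : Set α} {x y z : α}
    (hy : y ∈ S) (hz : z ∈ S) (h1 : RestrictMapsTo σ S x y) (h2 : RestrictMapsTo σ S x z) :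
    y = z := by
  obtain ⟨n, hn, rfl, hn2⟩ := h1
  obtain ⟨m, hm, rfl, hm2⟩ := h2
  rcases lt_trichotomy n m with h | h | h
  · exact (hm2 n hn h hy).elim
  · rw [h]
  · exact (hn2 m hm h hz).elim

theorem RestrictMapsTo.inv {α : Type*} {σ : Equiv.Perm α} {S : Set α} {x y : α}
    (h1 : RestrictMapsTo σ S x y) : RestrictMapsTo σ⁻¹ S y x := by
  obtain ⟨n, hn, rfl, hn2⟩ := h1
  have key : ∀ m ≤ n, (σ⁻¹ ^ m) ((σ ^ n) x) = (σ ^ (n - m)) x := by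
    intro m hm
    rw [inv_pow, Equiv.Perm.inv_eq_iff_eq, ← Equiv.Perm.mul_apply, ← pow_add]
    congr 2
    omega
  refine ⟨n, hn, ?_, ?_⟩
  · rw [key n le_rfl]; simp
  · intro m hm1 hm2
    rw [key m hm2.le]
    exact hn2 _ (by omega) (by omega)

theorem restrict_three {α : Type*} [Finite α] (σ : Equiv.Perm α) (a : Fin 3 → α)
    (ha : Function.Injective a) (horb : ∀ i j, ∃ n : ℕ, (σ ^ n) (a i) = a j) :
    ∃ ε : Fin 3 → Fin 3, (ε = ![1, 2, 0] ∨ ε = ![2, 0, 1]) ∧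
      ∀ i j, RestrictMapsTo σ (Set.range a) (a i) (a j) ↔ j = ε i := by
  classical
  have hex : ∀ i, ∃ j, RestrictMapsTo σ (Set.range a) (a i) (a j) := by
    intro i
    have h : ∃ n : ℕ, 0 < n ∧ (σ ^ n) (a i) ∈ Set.range a :=
      ⟨orderOf σ, orderOf_pos σ, by rw [pow_orderOf_eq_one]; exact ⟨i, rfl⟩⟩
    obtain ⟨j, hj⟩ := (Nat.find_spec h).2
    exact ⟨j, Nat.find h, (Nat.find_spec h).1, hj.symm,
      fun m hm hm2 hmem => Nat.find_min h hm2 ⟨hm, hmem⟩⟩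
  choose ε hε using hex
  have huniq : ∀ i j, RestrictMapsTo σ (Set.range a) (a i) (a j) ↔ j = ε i := by
    intro i j
    constructor
    · intro h
      exact ha (RestrictMapsTo.unique (Set.mem_range_self j) (Set.mem_range_self (ε i)) h (hε i))
    · rintro rfl
      exact hε i
  have hinj : ∀ i j, ε i = ε j → i = j := by
    intro i j h
    have h1 := (hε i).inv
    have h2 := (hε j).inv
    rw [h] at h1
    exact ha (RestrictMapsTo.unique (Set.mem_range_self i) (Set.mem_range_self j) h1 h2)
  have hfix : ∀ i, ε i ≠ i := by
    intro i h
    obtain ⟨n, hn, hn1, hn2⟩ := hε i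
    rw [h] at hn1
    obtain ⟨j, hj⟩ : ∃ j, j ≠ i := exists_ne i
    obtain ⟨m, hm⟩ := horb i j
    have hmod : (σ ^ (m % n)) (a i) = a j := by
      rw [← hm]
      conv_rhs => rw [← Nat.mod_add_div m n, pow_add, Equiv.Perm.mul_apply, pow_mul]
      congr 1
      have : ∀ k : ℕ, ((σ ^ n) ^ k) (a i) = a i := by
        intro k
        induction k with
        | zero => rfl
        | succ k ih => rw [pow_succ, Equiv.Perm.mul_apply, hn1, ih]
      exact (this _).symm
    rcases Nat.eq_zero_or_pos (m % n) with h0 | h0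
    · rw [h0] at hmod
      exact hj (ha hmod.symm)
    · exact hn2 _ h0 (Nat.mod_lt _ hn) (by rw [hmod]; exact ⟨j, rfl⟩)
  refine ⟨ε, ?_, huniq⟩
  clear huniq hε
  revert ε
  decide

/-- for a 3-connected finite simple graph `G` admitting a planar rotation
system, distinct vertices `v ≠ w`, three distinct edges `a 0, a 1, a 2` at `v` and three
distinct edges `b 0, b 1, b 2` at `w` (as darts), exactly three of the six bijections from
`A` to `B` (given by permutations `π` of `Fin 3`, pairing `a i` with `b (π i)`) make the
resulting marked graph planar. -/
theorem markedPlanar_three_of_six {V : Type*} [Fintype V]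
    (G : SimpleGraph V) (h3 : IsKConnected 3 G)
    (hpl : ∃ ρ : RotationSystem G, ρ.IsPlanar)
    (v w : V) (hvw : v ≠ w)
    (a b : Fin 3 → G.Dart) (ha : Function.Injective a) (hb : Function.Injective b)
    (hav : ∀ i, (a i).toProd.1 = v) (hbw : ∀ i, (b i).toProd.1 = w) :
    Nat.card {π : Equiv.Perm (Fin 3) // MarkedPlanar G a (b ∘ π)} = 3 := by
  classical
  obtain ⟨ρ, hρ⟩ := hpl
  have hfin : Finite G.Dart := Finite.of_injective _ SimpleGraph.Dart.toProd_injective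
  obtain ⟨ε, hε, hε2⟩ := restrict_three ρ.toPerm a ha
    (fun i j => ρ.single_orbit _ _ ((hav i).trans (hav j).symm))
  obtain ⟨δ, hδ, hδ2⟩ := restrict_three ρ.toPerm b hb
    (fun i j => ρ.single_orbit _ _ ((hbw i).trans (hbw j).symm))
  have hiff : ∀ π : Equiv.Perm (Fin 3),
      MarkedPlanar G a (b ∘ π) ↔ ∀ i, π i = δ (π (ε i)) := by
    intro π
    have hr : Set.range (b ∘ π) = Set.range b := π.surjective.range_comp b
    constructor
    · rintro ⟨ρ', hρ', h⟩ i
      rw [hr] at h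
      rcases whitney h3 ρ ρ' hρ hρ' with h' | h'
      · rw [h'] at h
        exact (hδ2 _ _).1 (h i (ε i) ((hε2 _ _).2 rfl))
      · rw [h'] at h
        have h1 := (h (ε i) i ((hε2 _ _).2 rfl).inv).inv
        rw [inv_inv] at h1
        exact (hδ2 _ _).1 h1
    · intro h
      refine ⟨ρ, hρ, fun i j hij => ?_⟩
      rw [hr]
      rw [hε2] at hij
      subst hij
      exact (hδ2 _ _).2 (h i)
  rw [Nat.card_congr (Equiv.subtypeEquivRight hiff), Nat.card_eq_fintype_card]
  rcases hε with rfl | rfl <;> rcases hδ with rfl | rfl <;> decide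
end
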